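/- Let α > 0, let M be a real symmetric positive definite m × m matrix, M_q a real symmetric positive semidefinite n × n matrix, and L a real m × n matrix such that S := M_q + α L^T M^{-1} L is positive definite. Define the block matrices A = [[M_q, 0, L^T], [0, αM, M], [L, M, 0]] and B₀ = [[S, 0, 0], [0, αM, 0], [0, 0, (1/α)M]], both of size (n + 2m). Then for any two real generalized eigenvalues μ₁, μ₂ of the pencil (A, B₀), i.e., μᵢ ∈ ℝ with A vᵢ = μᵢ B₀ vᵢ for some vᵢ ≠ 0, one has |μ₁| ≤ (cos(π/7)/sin(π/14)) · |μ₂|. In particular the condition number of B₀^{-1}A is at most cos(π/7)/sin(π/14) ≈ 4.05. -/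

import Mathlib

open Matrix

/-!
Write `V₁, V₂, V₃` for the polynomials given by `V₀ = 1`, `V₁ = X - 1`, `Vⱼ₊₂ = X Vⱼ₊₁ - Vⱼ`,
evaluated at an eigenvalue `μ` with eigenvector `(x, y, z)`. Going through the block rows from the
second to the third to the first turns `A v = μ B₀ v` into `z = α V₁ y`, `L x = V₂ M y` and
`V₁ M_q x + α V₃ Lᵀ y = 0`. Pairing the last equation with `x` gives
`V₁ (xᵀ M_q x) + α V₂ V₃ (yᵀ M y) = 0`, which forces `V₁ V₂ V₃ ≤ 0`. Since
`Vⱼ (2 cos θ) = cos ((2 j + 1) θ / 2) / cos (θ / 2)`, the six roots of the product are explicit and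
confine `μ` to `[2 cos (5π/7), 2 cos (3π/5)] ∪ [2 cos (3π/7), 1] ∪ [2 cos (π/5), 2 cos (π/7)]`.
Hence `2 sin (π/14) = 2 cos (3π/7) ≤ |μ| ≤ 2 cos (π/7)`.
-/

section ChebyshevV

open Polynomial
open Real (cos pi)

/-- The Chebyshev polynomials of the third kind, rescaled to be monic: in the usual normalization
this is `V n (X / 2)`, so that its roots lie in `[-2, 2]`. -/
noncomputable def chebyshevV (R : Type*) [CommRing R] : ℕ → R[X]
  | 0 => 1
  | 1 => X - 1
  | n + 2 => X * chebyshevV R (n + 1) - chebyshevV R n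

lemma eval_chebyshevV_one {R : Type*} [CommRing R] (x : R) :
    (chebyshevV R 1).eval x = x - 1 := by
  simp [chebyshevV]

lemma eval_chebyshevV_add_two {R : Type*} [CommRing R] (n : ℕ) (x : R) :
    (chebyshevV R (n + 2)).eval x =
      x * (chebyshevV R (n + 1)).eval x - (chebyshevV R n).eval x := by
  simp [chebyshevV]

lemma eval_chebyshevV_two {R : Type*} [CommRing R] (x : R) :
    (chebyshevV R 2).eval x = x * (chebyshevV R 1).eval x - 1 := by
  simp [chebyshevV]

lemma isMonicOfDegree_chebyshevV (R : Type*) [CommRing R] [Nontrivial R] :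
    ∀ n, IsMonicOfDegree (chebyshevV R n) n
  | 0 => isMonicOfDegree_zero_iff.2 rfl
  | 1 => by simpa [chebyshevV] using isMonicOfDegree_X_sub_one (1 : R)
  | n + 2 => by
    have hlead : IsMonicOfDegree (X * chebyshevV R (n + 1)) (n + 2) := by
      convert (isMonicOfDegree_X R).mul (isMonicOfDegree_chebyshevV R (n + 1)) using 1
      omega
    refine hlead.sub ?_
    rw [(isMonicOfDegree_chebyshevV R n).natDegree_eq]
    omega

lemma eval_chebyshevV_two_mul_cos (θ : ℝ) :
    ∀ n, (chebyshevV ℝ n).eval (2 * cos θ) * cos (θ / 2) = cos ((2 * n + 1) * (θ / 2))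
  | 0 => by simp [chebyshevV]
  | 1 => by
    have hrec : 2 * cos θ * cos (θ / 2) =
        cos (θ / 2) + cos ((2 * (1 : ℕ) + 1) * (θ / 2)) := by
      rw [Real.two_mul_cos_mul_cos]
      push_cast
      ring_nf
    rw [eval_chebyshevV_one]
    linear_combination hrec
  | n + 2 => by
    have hrec : 2 * cos θ * cos ((2 * (n + 1 : ℕ) + 1) * (θ / 2)) =
        cos ((2 * n + 1) * (θ / 2)) + cos ((2 * (n + 2 : ℕ) + 1) * (θ / 2)) := by
      rw [mul_right_comm, Real.two_mul_cos_mul_cos]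
      push_cast
      ring_nf
    rw [eval_chebyshevV_add_two]
    linear_combination hrec + 2 * cos θ * eval_chebyshevV_two_mul_cos θ (n + 1) -
      eval_chebyshevV_two_mul_cos θ n

/-- The angle `θ` for which `2 cos θ` is the `k`-th largest root of `chebyshevV ℝ n`,
counting from `k = 0`. -/
noncomputable def chebyshevVAngle (n k : ℕ) : ℝ := (2 * k + 1) * pi / (2 * n + 1)

lemma chebyshevVAngle_mem_Ico {n k : ℕ} (hk : k < n) :
    chebyshevVAngle n k ∈ Set.Ico 0 pi := by
  have hk' : (2 * k + 1 : ℝ) < 2 * n + 1 := by exact_mod_cast (by omega : 2 * k + 1 < 2 * n + 1)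
  refine ⟨by unfold chebyshevVAngle; positivity, ?_⟩
  rw [chebyshevVAngle, div_lt_iff₀ (by positivity), mul_comm]
  exact mul_lt_mul_of_pos_left hk' Real.pi_pos

lemma eval_chebyshevV_two_mul_cos_chebyshevVAngle {n k : ℕ} (hk : k < n) :
    (chebyshevV ℝ n).eval (2 * cos (chebyshevVAngle n k)) = 0 := by
  obtain ⟨hθ₀, hθπ⟩ := chebyshevVAngle_mem_Ico hk
  have hhalf : cos (chebyshevVAngle n k / 2) ≠ 0 :=
    (Real.cos_pos_of_mem_Ioo ⟨by linarith [Real.pi_pos], by linarith⟩).ne'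
  refine (mul_eq_zero.1 ?_).resolve_right hhalf
  rw [eval_chebyshevV_two_mul_cos, Real.cos_eq_zero_iff]
  refine ⟨k, ?_⟩
  rw [chebyshevVAngle]
  push_cast
  field_simp

lemma chebyshevV_eq_nodal (n : ℕ) :
    chebyshevV ℝ n =
      Lagrange.nodal (Finset.range n) fun k ↦ 2 * cos (chebyshevVAngle n k) := by
  have hinj : Set.InjOn (fun k ↦ 2 * cos (chebyshevVAngle n k)) (Finset.range n) := by
    intro j hj k hk hjk
    have hmem : ∀ i ∈ (Finset.range n : Set ℕ), chebyshevVAngle n i ∈ Set.Icc 0 pi :=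
      fun i hi ↦ Set.Ico_subset_Icc_self (chebyshevVAngle_mem_Ico (Finset.mem_range.1 hi))
    have hangle := Real.injOn_cos (hmem j hj) (hmem k hk) (mul_left_cancel₀ two_ne_zero hjk)
    unfold chebyshevVAngle at hangle
    field_simp at hangle
    exact_mod_cast (by linarith : (j : ℝ) = k)
  have hV := isMonicOfDegree_chebyshevV ℝ n
  have hdeg : (chebyshevV ℝ n).degree = n := by
    rw [degree_eq_natDegree hV.ne_zero, hV.natDegree_eq]
  refine eq_of_degree_le_of_eval_index_eq _ hinj (by simp [hdeg])
    (by simp [hdeg, Lagrange.degree_nodal]) ?_ fun k hk ↦ ?_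
  · rw [hV.leadingCoeff_eq, Lagrange.nodal_monic.leadingCoeff]
  · exact (eval_chebyshevV_two_mul_cos_chebyshevVAngle (Finset.mem_range.1 hk)).trans
      (Lagrange.eval_nodal_at_node (v := fun k ↦ 2 * cos (chebyshevVAngle n k)) hk).symm

lemma eval_chebyshevV_eq_prod (n : ℕ) (x : ℝ) :
    (chebyshevV ℝ n).eval x = ∏ k ∈ Finset.range n, (x - 2 * cos (chebyshevVAngle n k)) := by
  rw [chebyshevV_eq_nodal, Lagrange.eval_nodal]

lemma exists_mem_Icc_of_prod_sub_mul_sub_nonpos {ι R : Type*} [CommRing R] [LinearOrder R]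
    [IsStrictOrderedRing R] {s : Finset ι} {a b : ι → R} (hab : ∀ i ∈ s, a i ≤ b i) {x : R}
    (hx : ∏ i ∈ s, (x - a i) * (x - b i) ≤ 0) : ∃ i ∈ s, x ∈ Set.Icc (a i) (b i) := by
  by_contra! hout
  refine hx.not_gt (Finset.prod_pos fun i hi ↦ ?_)
  by_cases hax : a i ≤ x
  · have hbx : b i < x := not_le.1 fun h ↦ hout i hi ⟨hax, h⟩
    exact mul_pos (sub_pos.2 ((hab i hi).trans_lt hbx)) (sub_pos.2 hbx)
  · have hxa := not_le.1 hax
    exact mul_pos_of_neg_of_neg (sub_neg.2 hxa) (sub_neg.2 (hxa.trans_le (hab i hi)))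

lemma eval_chebyshevV_one_mul_two_mul_three (x : ℝ) :
    (chebyshevV ℝ 1).eval x * (chebyshevV ℝ 2).eval x * (chebyshevV ℝ 3).eval x =
      ((x - 2 * cos (5 * pi / 7)) * (x - 2 * cos (3 * pi / 5))) *
        ((x - 2 * cos (3 * pi / 7)) * (x - 2 * cos (pi / 3))) *
        ((x - 2 * cos (pi / 5)) * (x - 2 * cos (pi / 7))) := by
  simp only [eval_chebyshevV_eq_prod, chebyshevVAngle, Finset.prod_range_succ,
    Finset.prod_range_zero]
  push_cast
  ring_nf

lemma mem_Icc_of_eval_chebyshevV_mul_nonpos {μ : ℝ}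
    (hμ : (chebyshevV ℝ 1).eval μ * (chebyshevV ℝ 2).eval μ * (chebyshevV ℝ 3).eval μ ≤ 0) :
    μ ∈ Set.Icc (2 * cos (5 * pi / 7)) (2 * cos (3 * pi / 5)) ∨
      μ ∈ Set.Icc (2 * cos (3 * pi / 7)) (2 * cos (pi / 3)) ∨
      μ ∈ Set.Icc (2 * cos (pi / 5)) (2 * cos (pi / 7)) := by
  have hpi := Real.pi_pos
  have hcos : ∀ {θ φ : ℝ}, 0 ≤ φ → θ ≤ pi → φ ≤ θ → 2 * cos θ ≤ 2 * cos φ :=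
    fun h₀ hπ h ↦ by linarith [Real.cos_le_cos_of_nonneg_of_le_pi h₀ hπ h]
  let a := ![2 * cos (5 * pi / 7), 2 * cos (3 * pi / 7), 2 * cos (pi / 5)]
  let b := ![2 * cos (3 * pi / 5), 2 * cos (pi / 3), 2 * cos (pi / 7)]
  have hab : ∀ i ∈ Finset.univ, a i ≤ b i := by
    intro i _
    fin_cases i <;> exact hcos (by positivity) (by linarith) (by linarith)
  have hprod : ∏ i, (μ - a i) * (μ - b i) ≤ 0 := by
    rw [Fin.prod_univ_three]
    exact (eval_chebyshevV_one_mul_two_mul_three μ).ge.trans hμ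
  obtain ⟨i, -, hi⟩ := exists_mem_Icc_of_prod_sub_mul_sub_nonpos hab hprod
  fin_cases i
  exacts [.inl hi, .inr (.inl hi), .inr (.inr hi)]

lemma abs_mem_Icc_of_eval_chebyshevV_mul_nonpos {μ : ℝ}
    (hμ : (chebyshevV ℝ 1).eval μ * (chebyshevV ℝ 2).eval μ * (chebyshevV ℝ 3).eval μ ≤ 0) :
    |μ| ∈ Set.Icc (2 * cos (3 * pi / 7)) (2 * cos (pi / 7)) := by
  have hpi := Real.pi_pos
  have hcos : ∀ {θ φ : ℝ}, 0 ≤ φ → θ ≤ pi → φ ≤ θ → cos θ ≤ cos φ :=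
    Real.cos_le_cos_of_nonneg_of_le_pi
  have h₁₃ : cos (pi / 3) ≤ cos (pi / 7) := hcos (by positivity) (by linarith) (by linarith)
  have h₁₅ : cos (3 * pi / 7) ≤ cos (pi / 5) := hcos (by positivity) (by linarith) (by linarith)
  have hpos : 0 ≤ cos (3 * pi / 7) :=
    Real.cos_nonneg_of_neg_pi_div_two_le_of_le (by linarith) (by linarith)
  have h₅₇ : -cos (5 * pi / 7) ≤ cos (pi / 7) := by
    rw [← Real.cos_pi_sub]
    exact hcos (by positivity) (by linarith) (by linarith)
  have h₃₅ : cos (3 * pi / 7) ≤ -cos (3 * pi / 5) := by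
    rw [← Real.cos_pi_sub]
    exact hcos (by linarith) (by linarith) (by linarith)
  obtain ⟨hl, hu⟩ | ⟨hl, hu⟩ | ⟨hl, hu⟩ := mem_Icc_of_eval_chebyshevV_mul_nonpos hμ
  · rw [abs_of_nonpos (by linarith)]
    constructor <;> linarith
  all_goals
    rw [abs_of_nonneg (by linarith)]
    constructor <;> linarith

end ChebyshevV

section KKT

variable {ι κ K : Type*}

/-- The scalar `μ` is a generalized eigenvalue of the matrix pencil `(A, B)`. -/
def IsGeneralizedEigenvalue [Fintype ι] [CommRing K] (A B : Matrix ι ι K) (μ : K) : Prop :=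
  ∃ v, v ≠ 0 ∧ A *ᵥ v = μ • (B *ᵥ v)

/-- The double saddle-point matrix `[[M_q, 0, Lᵀ], [0, α M, M], [L, M, 0]]` of the optimality
system, with the two lower block rows grouped together. -/
def kktMatrix [CommRing K] (α : K) (M : Matrix κ κ K) (Mq : Matrix ι ι K) (L : Matrix κ ι K) :
    Matrix (ι ⊕ (κ ⊕ κ)) (ι ⊕ (κ ⊕ κ)) K :=
  fromBlocks Mq (fromCols 0 Lᵀ) (fromRows 0 L) (fromBlocks (α • M) M M 0)

variable [Field K] [Fintype ι] [Fintype κ] [DecidableEq κ]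

/-- The exact Schur-complement block-diagonal preconditioner
`diag (M_q + α Lᵀ M⁻¹ L, α M, α⁻¹ M)` of `kktMatrix α M Mq L`. -/
noncomputable def schurPreconditioner (α : K) (M : Matrix κ κ K) (Mq : Matrix ι ι K)
    (L : Matrix κ ι K) : Matrix (ι ⊕ (κ ⊕ κ)) (ι ⊕ (κ ⊕ κ)) K :=
  fromBlocks (Mq + α • (Lᵀ * M⁻¹ * L)) 0 0 (fromBlocks (α • M) 0 0 ((1 / α) • M))

lemma IsGeneralizedEigenvalue.exists_block_equations {α : K} {M : Matrix κ κ K}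
    {Mq : Matrix ι ι K} {L : Matrix κ ι K} {μ : K}
    (h : IsGeneralizedEigenvalue (kktMatrix α M Mq L) (schurPreconditioner α M Mq L) μ) :
    ∃ (x : ι → K) (y z : κ → K), ¬ (x = 0 ∧ y = 0 ∧ z = 0) ∧
      Mq *ᵥ x + Lᵀ *ᵥ z = μ • ((Mq + α • (Lᵀ * M⁻¹ * L)) *ᵥ x) ∧
      α • (M *ᵥ y) + M *ᵥ z = μ • α • (M *ᵥ y) ∧
      L *ᵥ x + M *ᵥ y = μ • α⁻¹ • (M *ᵥ z) := by
  obtain ⟨v, hv, h⟩ := h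
  refine ⟨v ∘ .inl, v ∘ .inr ∘ .inl, v ∘ .inr ∘ .inr, fun ⟨hx, hy, hz⟩ ↦ hv ?_, ?_, ?_, ?_⟩
  · ext (i | i | i)
    exacts [congrFun hx i, congrFun hy i, congrFun hz i]
  all_goals ext i
  · simpa [kktMatrix, schurPreconditioner, fromBlocks_mulVec, fromCols_mulVec, fromRows_mulVec,
      Function.comp_assoc] using congrFun h (.inl i)
  · simpa [kktMatrix, schurPreconditioner, fromBlocks_mulVec, fromCols_mulVec, fromRows_mulVec,
      smul_mulVec, Function.comp_assoc] using congrFun h (.inr (.inl i))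
  · simpa [kktMatrix, schurPreconditioner, fromBlocks_mulVec, fromCols_mulVec, fromRows_mulVec,
      smul_mulVec, Function.comp_assoc] using congrFun h (.inr (.inr i))

lemma IsGeneralizedEigenvalue.exists_reduced_equations {α : K} (hα : α ≠ 0) {M : Matrix κ κ K}
    (hM : IsUnit M) {Mq : Matrix ι ι K} {L : Matrix κ ι K} {μ : K}
    (h : IsGeneralizedEigenvalue (kktMatrix α M Mq L) (schurPreconditioner α M Mq L) μ) :
    ∃ (x : ι → K) (y : κ → K), ¬ (x = 0 ∧ y = 0) ∧
      L *ᵥ x = (chebyshevV K 2).eval μ • (M *ᵥ y) ∧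
      (chebyshevV K 1).eval μ • (Mq *ᵥ x) + (α * (chebyshevV K 3).eval μ) • (Lᵀ *ᵥ y) = 0 := by
  obtain ⟨x, y, z, hxyz, h₁, h₂, h₃⟩ := h.exists_block_equations
  have hz : z = (α * (chebyshevV K 1).eval μ) • y := by
    apply mulVec_injective_of_isUnit hM
    rw [mulVec_smul, eval_chebyshevV_one]
    linear_combination (norm := module) h₂
  have hLx : L *ᵥ x = (chebyshevV K 2).eval μ • (M *ᵥ y) := by
    rw [hz, mulVec_smul, smul_smul α⁻¹, inv_mul_cancel_left₀ hα, smul_smul] at h₃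
    rw [eval_chebyshevV_two, sub_smul, one_smul, ← h₃, add_sub_cancel_right]
  have hSx : (Mq + α • (Lᵀ * M⁻¹ * L)) *ᵥ x =
      Mq *ᵥ x + (α * (chebyshevV K 2).eval μ) • (Lᵀ *ᵥ y) := by
    have hinv : M⁻¹ *ᵥ (M *ᵥ y) = y := by
      rw [mulVec_mulVec, nonsing_inv_mul _ ((isUnit_iff_isUnit_det M).1 hM), one_mulVec]
    rw [add_mulVec, smul_mulVec, ← mulVec_mulVec, ← mulVec_mulVec, hLx, mulVec_smul, hinv,
      mulVec_smul, smul_smul]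
  refine ⟨x, y, fun ⟨hx, hy⟩ ↦ hxyz ⟨hx, hy, by rw [hz, hy, smul_zero]⟩, hLx, ?_⟩
  rw [hSx, hz, mulVec_smul] at h₁
  have hV₃ : (chebyshevV K 3).eval μ =
      μ * (chebyshevV K 2).eval μ - (chebyshevV K 1).eval μ := eval_chebyshevV_add_two 1 μ
  rw [hV₃]
  rw [eval_chebyshevV_one] at h₁ ⊢
  linear_combination (norm := module) -h₁

variable {α : ℝ} {M : Matrix κ κ ℝ} {Mq : Matrix ι ι ℝ} {L : Matrix κ ι ℝ}

lemma IsGeneralizedEigenvalue.eval_chebyshevV_mul_nonpos (hα : 0 < α) (hM : M.PosDef)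
    (hMq : Mq.PosSemidef) (hS : (Mq + α • (Lᵀ * M⁻¹ * L)).PosDef) {μ : ℝ}
    (h : IsGeneralizedEigenvalue (kktMatrix α M Mq L) (schurPreconditioner α M Mq L) μ) :
    (chebyshevV ℝ 1).eval μ * (chebyshevV ℝ 2).eval μ * (chebyshevV ℝ 3).eval μ ≤ 0 := by
  obtain ⟨x, y, hxy, hLx, hstat⟩ := h.exists_reduced_equations hα.ne' hM.isUnit
  generalize (chebyshevV ℝ 1).eval μ = V₁, (chebyshevV ℝ 2).eval μ = V₂,
    (chebyshevV ℝ 3).eval μ = V₃ at *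
  by_contra! hV
  have henergy : V₁ * (x ⬝ᵥ Mq *ᵥ x) + α * V₂ * V₃ * (y ⬝ᵥ M *ᵥ y) = 0 := by
    have hpair := congrArg (x ⬝ᵥ ·) hstat
    simp only [dotProduct_add, dotProduct_smul, dotProduct_transpose_mulVec, hLx, smul_eq_mul,
      dotProduct_zero] at hpair
    linear_combination hpair
  have hy : y = 0 := by
    by_contra hy
    have hMq_nonneg : 0 ≤ x ⬝ᵥ Mq *ᵥ x := by simpa using hMq.dotProduct_mulVec_nonneg x
    have hM_pos : 0 < y ⬝ᵥ M *ᵥ y := by simpa using hM.dotProduct_mulVec_pos hy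
    have hsum_pos : 0 < V₁ ^ 2 * (x ⬝ᵥ Mq *ᵥ x) + α * (V₁ * V₂ * V₃) * (y ⬝ᵥ M *ᵥ y) := by
      positivity
    exact hsum_pos.ne' (by linear_combination V₁ * henergy)
  have hx : x = 0 := by
    have hV₁ : V₁ ≠ 0 := left_ne_zero_of_mul (left_ne_zero_of_mul hV.ne')
    have hMqx : Mq *ᵥ x = 0 := by simpa [hy, hV₁] using hstat
    have hSx : (Mq + α • (Lᵀ * M⁻¹ * L)) *ᵥ x = 0 := by
      simp [add_mulVec, smul_mulVec, ← mulVec_mulVec, hMqx, hLx, hy]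
    by_contra hx
    simpa [hSx] using hS.dotProduct_mulVec_pos hx
  exact hxy ⟨hx, hy⟩

lemma IsGeneralizedEigenvalue.abs_mem_Icc (hα : 0 < α) (hM : M.PosDef)
    (hMq : Mq.PosSemidef) (hS : (Mq + α • (Lᵀ * M⁻¹ * L)).PosDef) {μ : ℝ}
    (h : IsGeneralizedEigenvalue (kktMatrix α M Mq L) (schurPreconditioner α M Mq L) μ) :
    |μ| ∈ Set.Icc (2 * Real.sin (Real.pi / 14)) (2 * Real.cos (Real.pi / 7)) := by
  rw [← Real.cos_pi_div_two_sub,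
    show Real.pi / 2 - Real.pi / 14 = 3 * Real.pi / 7 by ring]
  exact abs_mem_Icc_of_eval_chebyshevV_mul_nonpos
    (h.eval_chebyshevV_mul_nonpos hα hM hMq hS)

theorem stmt12_general (hα : 0 < α) (hM : M.PosDef) (hMq : Mq.PosSemidef)
    (hS : (Mq + α • (Lᵀ * M⁻¹ * L)).PosDef) {μ₁ μ₂ : ℝ}
    (h₁ : IsGeneralizedEigenvalue (kktMatrix α M Mq L) (schurPreconditioner α M Mq L) μ₁)
    (h₂ : IsGeneralizedEigenvalue (kktMatrix α M Mq L) (schurPreconditioner α M Mq L) μ₂) :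
    |μ₁| ≤ (Real.cos (Real.pi / 7) / Real.sin (Real.pi / 14)) * |μ₂| := by
  have hpi := Real.pi_pos
  have hsin : 0 < Real.sin (Real.pi / 14) :=
    Real.sin_pos_of_pos_of_lt_pi (by positivity) (by linarith)
  have hcos : 0 ≤ Real.cos (Real.pi / 7) :=
    Real.cos_nonneg_of_neg_pi_div_two_le_of_le (by linarith) (by linarith)
  calc |μ₁| ≤ 2 * Real.cos (Real.pi / 7) := (h₁.abs_mem_Icc hα hM hMq hS).2
    _ = Real.cos (Real.pi / 7) / Real.sin (Real.pi / 14) * (2 * Real.sin (Real.pi / 14)) := by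
      field_simp
    _ ≤ Real.cos (Real.pi / 7) / Real.sin (Real.pi / 14) * |μ₂| := by
      gcongr
      exact (h₂.abs_mem_Icc hα hM hMq hS).1

end KKT

theorem stmt12 {n m : ℕ} (α : ℝ) (hα : 0 < α)
    (M : Matrix (Fin m) (Fin m) ℝ) (hM : M.PosDef)
    (Mq : Matrix (Fin n) (Fin n) ℝ) (hMq : Mq.PosSemidef)
    (L : Matrix (Fin m) (Fin n) ℝ)
    (hS : (Mq + α • (Lᵀ * M⁻¹ * L)).PosDef) :
    ∀ μ₁ μ₂ : ℝ,
      (∃ v : (Fin n ⊕ (Fin m ⊕ Fin m)) → ℝ, v ≠ 0 ∧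
        (Matrix.fromBlocks Mq (Matrix.fromCols 0 Lᵀ)
            (Matrix.fromRows 0 L) (Matrix.fromBlocks (α • M) M M 0)) *ᵥ v =
          μ₁ • ((Matrix.fromBlocks (Mq + α • (Lᵀ * M⁻¹ * L)) 0 0
            (Matrix.fromBlocks (α • M) 0 0 ((1/α) • M))) *ᵥ v)) →
      (∃ v : (Fin n ⊕ (Fin m ⊕ Fin m)) → ℝ, v ≠ 0 ∧
        (Matrix.fromBlocks Mq (Matrix.fromCols 0 Lᵀ)
            (Matrix.fromRows 0 L) (Matrix.fromBlocks (α • M) M M 0)) *ᵥ v =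
          μ₂ • ((Matrix.fromBlocks (Mq + α • (Lᵀ * M⁻¹ * L)) 0 0
            (Matrix.fromBlocks (α • M) 0 0 ((1/α) • M))) *ᵥ v)) →
      |μ₁| ≤ (Real.cos (Real.pi / 7) / Real.sin (Real.pi / 14)) * |μ₂| := by
  intro μ₁ μ₂ h₁ h₂
  exact stmt12_general hα hM hMq hS h₁ h₂
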